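/- arXiv:2404.04599 — 2 statements merged into one kernel-verified Lean document; each statement's English description precedes it below -/
import Mathlib

section
/- Trace distance is preserved under discarding the B part of invariant ensembles (Corollary corollary-4241439): Let d, N ≥ 1 and let Dyes and Dno be Borel probability measures on the unit sphere of (Fin d × Fin d) → ℂ, each unitarily invariant on H_B. Define the density matrices ρ = ∫ (ψψ†)^{⊗N} dDyes(ψ) and σ = ∫ (ψψ†)^{⊗N} dDno(ψ) (Bochner integrals in the space of matrices indexed by (Fin N → Fin d × Fin d)). Then d_tr(ρ, σ) = d_tr(Tr_B ρ, Tr_B σ), where Tr_B denotes the partial trace over all N of the B registers. -/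
open scoped ComplexConjugate ComplexOrder Kronecker Matrix
open MeasureTheory

namespace PaperStmt

/-- The rank-one matrix `ψψ†` associated with a vector `ψ`. -/
noncomputable def outer {ι : Type*} (ψ : ι → ℂ) : Matrix ι ι ℂ :=
  Matrix.of fun x y => ψ x * conj (ψ y)

/-- The `N`-fold tensor power of a square matrix `ρ`. -/
noncomputable def tpow {ι : Type*} (ρ : Matrix ι ι ℂ) (N : ℕ) : Matrix (Fin N → ι) (Fin N → ι) ℂ :=
  Matrix.of fun x y => ∏ i, ρ (x i) (y i)

/-- `ψ` is a unit vector (for the ℓ² norm). -/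
def IsUnitVec {ι : Type*} [Fintype ι] (ψ : ι → ℂ) : Prop :=
  ∑ x, Complex.normSq (ψ x) = 1

/-- `0 ⊑ T ⊑ 1` in the Loewner order. -/
def IsTester {κ : Type*} [Fintype κ] [DecidableEq κ] (T : Matrix κ κ ℂ) : Prop :=
  T.PosSemidef ∧ ((1 : Matrix κ κ ℂ) - T).PosSemidef

/-- `ρ` is a density matrix: positive semidefinite with unit trace. -/
def IsDensity {ι : Type*} [Fintype ι] (ρ : Matrix ι ι ℂ) : Prop :=
  ρ.PosSemidef ∧ ρ.trace = 1

/-- The acceptance probability `tr (T · ρ^{⊗N})` of a tester `T` on `N` samples of `ρ`. -/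
noncomputable def acc {ι : Type*} [Fintype ι] {N : ℕ}
    (T : Matrix (Fin N → ι) (Fin N → ι) ℂ) (ρ : Matrix ι ι ℂ) : ℝ :=
  ((T * tpow ρ N).trace).re

/-- The trace distance `½ ∑ᵢ |λᵢ(ρ - σ)|` between (Hermitian) matrices. -/
noncomputable def traceDist {κ : Type*} [Fintype κ] [DecidableEq κ]
    (ρ σ : Matrix κ κ ℂ) : ℝ :=
  if h : (ρ - σ).IsHermitian then (1 / 2) * ∑ i, |h.eigenvalues i| else 0

/-- The local tester on `H_A` determined by a matrix `M` acting on Alice's registers. -/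
noncomputable def localA {d N : ℕ} (M : Matrix (Fin N → Fin d) (Fin N → Fin d) ℂ) :
    Matrix (Fin N → Fin d × Fin d) (Fin N → Fin d × Fin d) ℂ :=
  Matrix.of fun x y =>
    M (fun i => (x i).1) (fun i => (y i).1) *
      (if (fun i => (x i).2) = (fun i => (y i).2) then 1 else 0)

/-- The vector `(I ⊗ U) ψ` : the unitary `U` applied to the `B` part of `ψ`. -/
noncomputable def applyB {d : ℕ} (U : Matrix (Fin d) (Fin d) ℂ) (ψ : Fin d × Fin d → ℂ) :
    Fin d × Fin d → ℂ :=
  fun p => ∑ k, U p.2 k * ψ (p.1, k)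

/-- The partial trace over the second (`B`) tensor factor. -/
noncomputable def ptraceB {d : ℕ} (M : Matrix (Fin d × Fin d) (Fin d × Fin d) ℂ) :
    Matrix (Fin d) (Fin d) ℂ :=
  Matrix.of fun a b => ∑ j, M (a, j) (b, j)


/-- The partial trace over all `N` of the `B` registers. -/
noncomputable def ptraceBn {d N : ℕ}
    (M : Matrix (Fin N → Fin d × Fin d) (Fin N → Fin d × Fin d) ℂ) :
    Matrix (Fin N → Fin d) (Fin N → Fin d) ℂ :=
  Matrix.of fun x y => ∑ b : Fin N → Fin d, M (fun i => (x i, b i)) (fun i => (y i, b i))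

set_option linter.unusedSectionVars false


section
open scoped MatrixOrder

lemma psd_sq_inj {κ : Type*} [Fintype κ] [DecidableEq κ] {K L : Matrix κ κ ℂ}
    (hK : K.PosSemidef) (hL : L.PosSemidef) (h : K * K = L * L) : K = L := by
  rw [← CFC.sqrt_mul_self K hK.nonneg, h, CFC.sqrt_mul_self L hL.nonneg]

lemma exists_abs {κ : Type*} [Fintype κ] [DecidableEq κ] {Y : Matrix κ κ ℂ}
    (hY : Y.IsHermitian) : ∃ K : Matrix κ κ ℂ, K.PosSemidef ∧ K * K = Y * Y ∧
      (∑ i, |hY.eigenvalues i| : ℝ) = K.trace.re := by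
  set U := hY.eigenvectorUnitary
  have hs := hY.spectral_theorem
  rw [Unitary.conjStarAlgAut_apply] at hs
  have hUU : (star (U : Matrix κ κ ℂ)) * (U : Matrix κ κ ℂ) = 1 := Unitary.coe_star_mul_self U
  have key : ∀ D E : Matrix κ κ ℂ, ((U : Matrix κ κ ℂ) * D * star (U : Matrix κ κ ℂ)) *
      ((U : Matrix κ κ ℂ) * E * star (U : Matrix κ κ ℂ)) =
      (U : Matrix κ κ ℂ) * (D * E) * star (U : Matrix κ κ ℂ) := by
    intro D E
    calc _ = (U : Matrix κ κ ℂ) * D * (star (U : Matrix κ κ ℂ) * (U : Matrix κ κ ℂ)) * E *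
        star (U : Matrix κ κ ℂ) := by simp only [Matrix.mul_assoc]
      _ = _ := by rw [hUU]; simp only [Matrix.mul_assoc, Matrix.mul_one]
  refine ⟨(U : Matrix κ κ ℂ) * Matrix.diagonal (fun i => ((|hY.eigenvalues i| : ℝ) : ℂ)) *
    star (U : Matrix κ κ ℂ), ?_, ?_, ?_⟩
  · apply Matrix.PosSemidef.mul_mul_conjTranspose_same
    rw [Matrix.posSemidef_diagonal_iff]
    intro i
    simp
  · have hYY := (congrArg₂ (· * ·) hs hs).trans (key _ _)
    refine Eq.trans (key _ _) (Eq.trans ?_ hYY.symm)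
    congr 2
    simp only [Matrix.diagonal_mul_diagonal]
    congr 1
    ext i
    simp only [Function.comp, RCLike.ofReal_eq_complex_ofReal] 
    norm_cast
    simp
  · rw [Matrix.trace_mul_comm, ← Matrix.mul_assoc, hUU, Matrix.one_mul, Matrix.trace_diagonal]
    simp

lemma sum_abs_eig {κ : Type*} [Fintype κ] [DecidableEq κ] {X K : Matrix κ κ ℂ}
    (hX : X.IsHermitian) (hK : K.PosSemidef) (h : K * K = X * X) :
    (∑ i, |hX.eigenvalues i| : ℝ) = K.trace.re := by
  obtain ⟨L, hL, hL2, ht⟩ := exists_abs hX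
  rw [ht, psd_sq_inj hL hK (hL2.trans h.symm)]

end

section grp
variable {S α : Type*} [Group S] [Fintype S] [Fintype α] [DecidableEq α] [MulAction S α]

/-- permutation matrix -/
noncomputable def pm (α : Type*) [DecidableEq α] [MulAction S α] (s : S) : Matrix α α ℂ :=
  (1 : Matrix α α ℂ).submatrix (fun a => s • a) id

lemma pm_mul {β : Type*} (s : S) (M : Matrix α β ℂ) : pm α s * M = M.submatrix (fun a => s • a) id := by
  ext a b; simp [pm, Matrix.mul_apply, Matrix.one_apply]

lemma mul_pm {β : Type*} (s : S) (M : Matrix β α ℂ) :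
    M * pm α s = M.submatrix id (fun a => s⁻¹ • a) := by
  ext a b; simp [pm, Matrix.mul_apply, Matrix.one_apply, ← eq_inv_smul_iff]

/-- symmetrizer -/
noncomputable def symP (S α : Type*) [Group S] [Fintype S] [DecidableEq α] [MulAction S α] :
    Matrix α α ℂ := (Fintype.card S : ℂ)⁻¹ • ∑ s : S, pm α s

lemma pm_conjTranspose (s : S) : (pm α s)ᴴ = pm α s⁻¹ := by
  ext a b; simp only [pm, Matrix.conjTranspose_apply, Matrix.submatrix_apply, Matrix.one_apply, id]
  by_cases h : s • b = a
  · simp [← h]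
  · have : ¬ (s⁻¹ • a = b) := fun h' => h (by simp [← h'])
    simp [h, this]

lemma symP_herm : (symP S α)ᴴ = symP S α := by
  simp only [symP, Matrix.conjTranspose_smul, Matrix.conjTranspose_sum, pm_conjTranspose]
  congr 1
  · simp
  · exact Equiv.sum_comp (Equiv.inv S) (fun s => pm α s)

lemma symP_smul (s : S) (a b : α) : symP S α (s • a) b = symP S α a b := by
  simp only [symP, Matrix.smul_apply, Matrix.sum_apply]
  congr 1
  rw [← Equiv.sum_comp (Equiv.mulRight s) (fun t => pm α t a b)]
  simp [pm, mul_smul]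

lemma mul_symP_of {β : Type*} (M : Matrix β α ℂ) (h : ∀ (s : S) a b, M a (s • b) = M a b) :
    M * symP S α = M := by
  simp only [symP, Matrix.mul_smul, Matrix.mul_sum, mul_pm]
  have : ∀ s : S, M.submatrix id (fun a => s⁻¹ • a) = M := by
    intro s; ext a b; simp [h]
  simp only [this, Finset.sum_const, Finset.card_univ]
  rw [← Nat.cast_smul_eq_nsmul ℂ, smul_smul, inv_mul_cancel₀, one_smul]
  simp

lemma symP_smul_right (s : S) (a b : α) : symP S α a (s • b) = symP S α a b := by
  have := congrFun (congrFun (symP_herm (S := S) (α := α)) a) (s • b)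
  rw [← this, Matrix.conjTranspose_apply, symP_smul, ← Matrix.conjTranspose_apply, symP_herm]

lemma symP_idem : symP S α * symP S α = symP S α :=
  mul_symP_of _ fun s a b => symP_smul_right s a b

lemma comm_symP (M : Matrix α α ℂ) (h : ∀ (s : S) a b, M (s • a) (s • b) = M a b) :
    M * symP S α = symP S α * M := by
  simp only [symP, Matrix.mul_smul, Matrix.smul_mul, Matrix.mul_sum, Matrix.sum_mul, mul_pm, pm_mul]
  congr 1
  refine Finset.sum_congr rfl fun s _ => ?_
  ext a b
  simp only [Matrix.submatrix_apply, id]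
  rw [← h s a]; simp

/-- partial trace over second factor -/
noncomputable def pt (M : Matrix (α × α) (α × α) ℂ) : Matrix α α ℂ :=
  Matrix.of fun a c => ∑ b, M (a, b) (c, b)

lemma pt_psd {M : Matrix (α × α) (α × α) ℂ} (h : M.PosSemidef) : (pt M).PosSemidef := by
  have : pt M = ∑ b, M.submatrix (fun a => (a, b)) (fun a => (a, b)) := by
    ext a c; simp [pt, Matrix.sum_apply]
  rw [this]
  exact Matrix.posSemidef_sum _ fun b _ => h.submatrix _

lemma pt_trace (M : Matrix (α × α) (α × α) ℂ) : (pt M).trace = M.trace := by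
  simp [pt, Matrix.trace, Fintype.sum_prod_type]

lemma pt_left (Y : Matrix α α ℂ) (M : Matrix (α × α) (α × α) ℂ) :
    pt ((Y ⊗ₖ (1 : Matrix α α ℂ)) * M) = Y * pt M := by
  ext a c
  simp [pt, Matrix.mul_apply, Fintype.sum_prod_type, Matrix.one_apply, Finset.mul_sum]
  exact Finset.sum_comm

lemma pt_right (Y : Matrix α α ℂ) (M : Matrix (α × α) (α × α) ℂ) :
    pt (M * (Y ⊗ₖ (1 : Matrix α α ℂ))) = pt M * Y := by
  ext a c
  simp [pt, Matrix.mul_apply, Fintype.sum_prod_type, Matrix.one_apply, Finset.sum_mul]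
  exact Finset.sum_comm

/-- main abstract lemma -/
lemma abstract_main (S : Type*) [Group S] [Fintype S] [MulAction S α]
    (X : Matrix (α × α) (α × α) ℂ) (hX : X.IsHermitian)
    (h1 : ∀ (s : S) p q, X (s • p) q = X p q)
    (h2 : ∀ G : Matrix α α ℂ, (∀ (s : S) a b, G (s • a) (s • b) = G a b) → ∀ a b,
      ∑ g, ∑ h, X (a, b) (g, h) * G h g = ∑ h, G b h * ∑ c, X (a, h) (c, c)) :
    ∃ Z : Matrix (α × α) (α × α) ℂ, Z.PosSemidef ∧ Z * Z = X * X ∧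
      pt Z * pt Z = pt X * pt X := by
  set P := symP S (α × α) with hP
  have h1' : ∀ (s : S) p q, X p (s • q) = X p q := by
    intro s p q
    rw [← hX.apply, h1, hX.apply]
  have hXP : X * P = X := mul_symP_of X h1'
  obtain ⟨Y, hYd⟩ : ∃ Y : Matrix α α ℂ, ∀ a b, Y a b = ∑ c, X (a, b) (c, c) :=
    ⟨Matrix.of fun a b => ∑ c, X (a, b) (c, c), fun _ _ => rfl⟩
  have hYinv : ∀ (s : S) a b, Y (s • a) (s • b) = Y a b := by
    intro s a b
    simp only [hYd]
    exact Finset.sum_congr rfl fun c _ => h1 s (a, b) (c, c)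
  have hXY : X = (Y ⊗ₖ (1 : Matrix α α ℂ)) * P := by
    conv_lhs => rw [← hXP]
    ext ⟨a, b⟩ q
    have := h2 (Matrix.of fun h g => P (g, h) q) (fun s a b => symP_smul s (b, a) q) a b
    simp only [Matrix.of_apply] at this
    simp only [Matrix.mul_apply, Fintype.sum_prod_type, this]
    simp [Matrix.one_apply, hYd, mul_comm]
  have hkinv : ∀ M : Matrix α α ℂ, (∀ (s : S) a b, M (s • a) (s • b) = M a b) →
      (M ⊗ₖ (1 : Matrix α α ℂ)) * P = P * (M ⊗ₖ (1 : Matrix α α ℂ)) := by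
    intro M hM
    apply comm_symP
    rintro s ⟨a, b⟩ ⟨c, e⟩
    simp [Matrix.kroneckerMap_apply, hM, Matrix.one_apply]
  have hY : Y.IsHermitian := by
    have h3 : X = (Yᴴ ⊗ₖ (1 : Matrix α α ℂ)) * P := by
      rw [hkinv Yᴴ (fun s a b => by simp only [Matrix.conjTranspose_apply, hYinv])]
      have := congrArg Matrix.conjTranspose hXY
      rw [hX.eq, Matrix.conjTranspose_mul, symP_herm, Matrix.conjTranspose_kronecker,
        Matrix.conjTranspose_one] at this
      exact this
    have hO : ∀ p : α × α, ∑ c, P p (c, c) = if p.1 = p.2 then 1 else 0 := by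
      intro p
      let O : Matrix (Fin 1) (α × α) ℂ := Matrix.of fun _ p => if p.1 = p.2 then 1 else 0
      have h4 : O * P = O := mul_symP_of O (by
        rintro s a ⟨b, c⟩; simp [O])
      have h5 := congrFun (congrFun h4 0) p
      simp only [Matrix.mul_apply, O, Matrix.of_apply, Fintype.sum_prod_type, ite_mul, one_mul,
        zero_mul, Finset.sum_ite_eq, Finset.mem_univ, if_true] at h5
      have h6 := congrArg star h5
      rw [star_sum] at h6
      have h7 : ∀ c, star (P (c, c) p) = P p (c, c) := fun c => by
        rw [← Matrix.conjTranspose_apply, symP_herm]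
      simp only [h7] at h6
      rw [h6]; split_ifs <;> simp
    ext a b
    rw [hYd a b, h3]
    have h8 : ∀ (M : Matrix α α ℂ) c, ((M ⊗ₖ (1 : Matrix α α ℂ)) * P) (a, b) (c, c) =
        ∑ g, M a g * P (g, b) (c, c) := by
      intro M c
      simp [Matrix.mul_apply, Fintype.sum_prod_type, Matrix.one_apply]
    simp only [h8]
    rw [Finset.sum_comm]
    simp only [← Finset.mul_sum, hO]
    simp
  obtain ⟨K, hK, hK2, -⟩ := exists_abs hY
  have hKinv : ∀ (s : S) a b, K (s • a) (s • b) = K a b := by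
    intro s a b
    have : K.submatrix (fun a => s • a) (fun a => s • a) = K := by
      apply psd_sq_inj (hK.submatrix _) hK
      have := Matrix.submatrix_mul_equiv K K (fun a => s • a) (MulAction.toPerm s) (fun a => s • a)
      erw [this]
      rw [hK2]
      erw [← Matrix.submatrix_mul_equiv Y Y (fun a => s • a) (MulAction.toPerm s) (fun a => s • a)]
      have hh : Y.submatrix (fun a => s • a) (MulAction.toPerm s) = Y := by
        ext a b; simp [hYinv]
      have hh' : Y.submatrix (MulAction.toPerm s) (fun a => s • a) = Y := by
        ext a b; simp [hYinv]
      rw [hh, hh']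
    exact congrFun (congrFun this a) b
  have hsq : ∀ M : Matrix α α ℂ, (∀ (s : S) a b, M (s • a) (s • b) = M a b) →
      ((M ⊗ₖ (1 : Matrix α α ℂ)) * P) * ((M ⊗ₖ (1 : Matrix α α ℂ)) * P) =
      ((M * M) ⊗ₖ (1 : Matrix α α ℂ)) * P := by
    intro M hM
    nth_rewrite 1 [hkinv M hM]
    rw [← Matrix.mul_assoc, Matrix.mul_assoc P, ← Matrix.mul_kronecker_mul, Matrix.mul_one,
      ← hkinv _ (fun s a b => ?_), Matrix.mul_assoc, symP_idem]
    simp only [Matrix.mul_apply]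
    rw [← Equiv.sum_comp (MulAction.toPerm s)]
    simp [hM]
  have hpsq : ∀ M : Matrix α α ℂ, (∀ (s : S) a b, M (s • a) (s • b) = M a b) →
      pt ((M ⊗ₖ (1 : Matrix α α ℂ)) * P) * pt ((M ⊗ₖ (1 : Matrix α α ℂ)) * P) =
      (M * M) * (pt P * pt P) := by
    intro M hM
    have : M * pt P = pt P * M := by rw [← pt_left, hkinv M hM, pt_right]
    rw [pt_left, Matrix.mul_assoc, ← Matrix.mul_assoc (pt P), ← this]
    simp only [Matrix.mul_assoc]
  refine ⟨(K ⊗ₖ (1 : Matrix α α ℂ)) * P, ?_, ?_, ?_⟩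
  · have : (K ⊗ₖ (1 : Matrix α α ℂ)) * P = Pᴴ * (K ⊗ₖ (1 : Matrix α α ℂ)) * P := by
      rw [symP_herm, ← hkinv K hKinv, Matrix.mul_assoc, symP_idem]
    rw [this]
    exact (hK.kronecker Matrix.PosSemidef.one).conjTranspose_mul_mul_same P
  · rw [hsq K hKinv, hK2, ← hsq Y hYinv, ← hXY]
  · rw [hpsq K hKinv, hK2, ← hpsq Y hYinv, ← hXY]
end grp


section poly

/-- The homogeneous polynomial function attached to the functional with coefficients `c`. -/
noncomputable def pf {d N : ℕ} (c : (Fin N → Fin d) → (Fin N → Fin d) → ℂ)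
    (A : Matrix (Fin d) (Fin d) ℂ) : ℂ :=
  ∑ x, ∑ y, c x y * ∏ i, A (x i) (y i)

lemma infinite_circle : {z : ℂ | z * conj z = 1}.Infinite := by
  have h : Set.InjOn (fun t : ℝ => (t + Complex.I * Real.sqrt (1 - t ^ 2) : ℂ)) (Set.Icc 0 1) := by
    intro a _ b _ hab
    have := congrArg Complex.re hab
    simpa using this
  have h2 := (Set.Icc_infinite (zero_lt_one' ℝ)).image h
  refine h2.mono ?_
  rintro _ ⟨t, ht, rfl⟩
  have h3 : 0 ≤ 1 - t ^ 2 := by nlinarith [ht.1, ht.2]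
  have h4 := Real.sq_sqrt h3
  simp only [Set.mem_ofPred_eq]
  rw [Complex.mul_conj, Complex.normSq_apply]
  norm_cast
  simp
  nlinarith

lemma pf_diag {d N : ℕ} (c : (Fin N → Fin d) → (Fin N → Fin d) → ℂ)
    (h : ∀ U ∈ Matrix.unitaryGroup (Fin d) ℂ, pf c U = 0)
    (V : Matrix.unitaryGroup (Fin d) ℂ) (z : Fin d → ℂ) :
    pf c ((V : Matrix (Fin d) (Fin d) ℂ) * Matrix.diagonal z *
      star (V : Matrix (Fin d) (Fin d) ℂ)) = 0 := by
  let P : MvPolynomial (Fin d) ℂ := ∑ x : Fin N → Fin d, ∑ y : Fin N → Fin d,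
    MvPolynomial.C (c x y) * ∏ i, ∑ k, MvPolynomial.C ((V : Matrix (Fin d) (Fin d) ℂ) (x i) k *
      star ((V : Matrix (Fin d) (Fin d) ℂ) (y i) k)) * MvPolynomial.X k
  have hev : ∀ w, MvPolynomial.eval w P = pf c ((V : Matrix (Fin d) (Fin d) ℂ) * Matrix.diagonal w *
      star (V : Matrix (Fin d) (Fin d) ℂ)) := by
    intro w
    simp only [P, pf, map_sum, map_mul, map_prod, MvPolynomial.eval_C, MvPolynomial.eval_X]
    refine Finset.sum_congr rfl fun x _ => Finset.sum_congr rfl fun y _ => ?_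
    congr 1
    refine Finset.prod_congr rfl fun i _ => ?_
    rw [Matrix.mul_apply]
    simp only [Matrix.mul_diagonal, Matrix.star_apply]
    refine Finset.sum_congr rfl fun k _ => ?_
    ring
  have hP : P = 0 := by
    refine MvPolynomial.funext_set (fun _ => {z : ℂ | z * conj z = 1}) (fun _ => infinite_circle) ?_
    intro w hw
    rw [hev, map_zero]
    apply h
    have hw' : Matrix.diagonal w ∈ Matrix.unitaryGroup (Fin d) ℂ := by
      rw [Matrix.mem_unitaryGroup_iff, Matrix.star_eq_conjTranspose, Matrix.diagonal_conjTranspose,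
        Matrix.diagonal_mul_diagonal, ← Matrix.diagonal_one]
      congr 1
      ext i
      exact hw i trivial
    exact mul_mem (mul_mem V.2 hw') (Unitary.star_mem V.2)
  rw [← hev, hP, map_zero]

lemma pf_herm {d N : ℕ} (c : (Fin N → Fin d) → (Fin N → Fin d) → ℂ)
    (h : ∀ U ∈ Matrix.unitaryGroup (Fin d) ℂ, pf c U = 0)
    (H : Matrix (Fin d) (Fin d) ℂ) (hH : H.IsHermitian) : pf c H = 0 := by
  have hs := hH.spectral_theorem
  rw [Unitary.conjStarAlgAut_apply] at hs
  rw [hs]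
  exact pf_diag c h _ _

lemma pf_all {d N : ℕ} (c : (Fin N → Fin d) → (Fin N → Fin d) → ℂ)
    (h : ∀ U ∈ Matrix.unitaryGroup (Fin d) ℂ, pf c U = 0)
    (A : Matrix (Fin d) (Fin d) ℂ) : pf c A = 0 := by
  have key : ∀ H K : Matrix (Fin d) (Fin d) ℂ, H.IsHermitian → K.IsHermitian → ∀ z : ℂ,
      pf c (H + z • K) = 0 := by
    intro H K hH hK z
    let P : Polynomial ℂ := ∑ x : Fin N → Fin d, ∑ y : Fin N → Fin d,
      Polynomial.C (c x y) * ∏ i, (Polynomial.C (H (x i) (y i)) +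
        Polynomial.X * Polynomial.C (K (x i) (y i)))
    have hev : ∀ w, Polynomial.eval w P = pf c (H + w • K) := by
      intro w
      simp [P, pf, Polynomial.eval_finsetSum, Polynomial.eval_prod]
      simp only [mul_comm w]
    have hP : P = 0 := by
      apply Polynomial.eq_zero_of_infinite_isRoot
      refine (Set.infinite_range_of_injective Complex.ofReal_injective).mono ?_
      rintro _ ⟨t, rfl⟩
      simp only [Set.mem_ofPred_eq, Polynomial.IsRoot.def]
      rw [hev]
      apply pf_herm c h
      refine hH.add ?_
      ext i j
      simp [← hK.apply i j]
    rw [← hev, hP, Polynomial.eval_zero]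
  have := key ((1 / 2 : ℂ) • (A + Aᴴ)) ((Complex.I / 2 : ℂ) • (Aᴴ - A)) ?_ ?_ Complex.I
  · convert this using 2
    ext i j
    simp only [Matrix.add_apply, Matrix.smul_apply, Matrix.sub_apply, smul_eq_mul]
    linear_combination -((Aᴴ i j - A i j) / 2) * (Complex.I_sq)
  · ext i j
    simp
    ring
  · ext i j
    simp
    ring

lemma pf_polar {d N : ℕ} (c : (Fin N → Fin d) → (Fin N → Fin d) → ℂ)
    (h : ∀ A : Matrix (Fin d) (Fin d) ℂ, pf c A = 0) (x y : Fin N → Fin d) :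
    ∑ s : Equiv.Perm (Fin N), c (x ∘ s) (y ∘ s) = 0 := by
  let P : MvPolynomial (Fin N) ℂ := ∑ f : Fin N → Fin N,
    MvPolynomial.monomial (∑ i, Finsupp.single (f i) 1) (c (x ∘ f) (y ∘ f))
  have hP : P = 0 := by
    apply MvPolynomial.funext
    intro t
    rw [map_zero, ← h (Matrix.of fun a b => ∑ j, t j * if a = x j ∧ b = y j then 1 else 0)]
    have h1 : ∀ f : Fin N → Fin N, MvPolynomial.monomial (∑ i, Finsupp.single (f i) 1)
        (c (x ∘ f) (y ∘ f)) = MvPolynomial.C (c (x ∘ f) (y ∘ f)) * ∏ i, MvPolynomial.X (f i) := by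
      intro f
      rw [MvPolynomial.monomial_sum_index]; rfl
    simp only [P, h1, map_sum, map_mul, map_prod, MvPolynomial.eval_C, MvPolynomial.eval_X, pf,
      Matrix.of_apply, Finset.prod_univ_sum, Fintype.piFinset_univ, Finset.prod_mul_distrib,
      Finset.mul_sum]
    have h2 : ∀ (u v : Fin N → Fin d) (f : Fin N → Fin N),
        (∏ i, if u i = x (f i) ∧ v i = y (f i) then (1 : ℂ) else 0) =
          if u = x ∘ f then (if v = y ∘ f then 1 else 0) else 0 := by
      intro u v f
      rw [Finset.prod_ite_zero]
      simp only [Finset.mem_univ, true_imp_iff, forall_and, Finset.prod_const_one, funext_iff,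
        Function.comp, ite_and]
    simp only [h2]
    simp only [Finset.sum_comm (s := (Finset.univ : Finset (Fin N → Fin d)))
      (t := (Finset.univ : Finset (Fin N → Fin N)))]
    simp
  have hc := congrArg (MvPolynomial.coeff (∑ i, Finsupp.single i 1)) hP
  simp only [P, MvPolynomial.coeff_sum, MvPolynomial.coeff_monomial, MvPolynomial.coeff_zero] at hc
  rw [← hc, ← Finset.sum_filter]
  refine Finset.sum_bij (fun s _ => ⇑s) ?_ ?_ ?_ ?_
  · intro s _
    simp only [Finset.mem_filter, Finset.mem_univ, true_and]
    exact Equiv.sum_comp s (fun i => Finsupp.single i 1)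
  · intro s _ t _ hst
    exact DFunLike.coe_injective hst
  · intro f hf
    simp only [Finset.mem_filter, Finset.mem_univ, true_and] at hf
    have hsurj : Function.Surjective f := by
      intro j
      by_contra hj
      push Not at hj
      have := DFunLike.congr_fun hf j
      simp [Finsupp.finsetSum_apply, Finsupp.single_apply, hj] at this
    exact ⟨Equiv.ofBijective f ⟨Finite.injective_iff_surjective.mpr hsurj, hsurj⟩, Finset.mem_univ _, rfl⟩
  · intro s _
    rfl

lemma functional_zero {d N : ℕ} (c : (Fin N → Fin d) → (Fin N → Fin d) → ℂ)
    (h : ∀ U ∈ Matrix.unitaryGroup (Fin d) ℂ, pf c U = 0)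
    (G : Matrix (Fin N → Fin d) (Fin N → Fin d) ℂ)
    (hG : ∀ (s : Equiv.Perm (Fin N)) x y, G (x ∘ s) (y ∘ s) = G x y) :
    ∑ x, ∑ y, c x y * G x y = 0 := by
  have hp := pf_polar c (pf_all c h)
  have h1 : ∀ s : Equiv.Perm (Fin N), ∑ x, ∑ y, c x y * G x y =
      ∑ x, ∑ y, c (x ∘ s) (y ∘ s) * G x y := by
    intro s
    let e : (Fin N → Fin d) ≃ (Fin N → Fin d) := s.symm.arrowCongr (Equiv.refl _)
    have he : ∀ x, e x = x ∘ s := fun x => by ext i; simp [e, Equiv.arrowCongr]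
    rw [← Equiv.sum_comp e]
    refine Finset.sum_congr rfl fun x _ => ?_
    rw [← Equiv.sum_comp e]
    refine Finset.sum_congr rfl fun y _ => ?_
    rw [he, he, hG]
  have h2 : ∑ s : Equiv.Perm (Fin N), ∑ x, ∑ y, c x y * G x y = 0 := by
    rw [Finset.sum_congr rfl fun s _ => h1 s, Finset.sum_comm]
    refine Finset.sum_eq_zero fun x _ => ?_
    rw [Finset.sum_comm]
    refine Finset.sum_eq_zero fun y _ => ?_
    rw [← Finset.sum_mul, hp, zero_mul]
  rw [Finset.sum_const, nsmul_eq_mul] at h2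
  rcases mul_eq_zero.mp h2 with h3 | h3
  · exfalso
    simp [Fintype.card_ne_zero] at h3
  · exact h3
end poly

section conc

/-- product amplitude -/
noncomputable def V {d N : ℕ} (ψ : Fin d × Fin d → ℂ) (a b : Fin N → Fin d) : ℂ :=
  ∏ i, ψ (a i, b i)

/-- tensor power of matrix entries -/
noncomputable def TP {d N : ℕ} (U : Matrix (Fin d) (Fin d) ℂ) (a b : Fin N → Fin d) : ℂ :=
  ∏ i, U (a i) (b i)

lemma tpow_outer {d N : ℕ} (ψ : Fin d × Fin d → ℂ) (a b g h : Fin N → Fin d) :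
    tpow (outer ψ) N (fun i => (a i, b i)) (fun i => (g i, h i)) = V ψ a b * conj (V ψ g h) := by
  simp [tpow, outer, V, Finset.prod_mul_distrib]

lemma V_applyB {d N : ℕ} (U : Matrix (Fin d) (Fin d) ℂ) (ψ : Fin d × Fin d → ℂ)
    (a b : Fin N → Fin d) : V (applyB U ψ) a b = ∑ h, TP U b h * V ψ a h := by
  simp [V, applyB, TP, Finset.prod_univ_sum, Finset.prod_mul_distrib]

lemma applyB_star {d : ℕ} (U : Matrix (Fin d) (Fin d) ℂ) (hU : U ∈ Matrix.unitaryGroup (Fin d) ℂ)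
    (ψ : Fin d × Fin d → ℂ) : applyB (star U) (applyB U ψ) = ψ := by
  ext ⟨a, b⟩
  have h := Matrix.mem_unitaryGroup_iff'.mp hU
  simp only [applyB, Finset.mul_sum]
  rw [Finset.sum_comm]
  simp only [← mul_assoc, ← Finset.sum_mul]
  simp only [← Matrix.mul_apply, h]
  simp [Matrix.one_apply]

lemma continuous_applyB {d : ℕ} (U : Matrix (Fin d) (Fin d) ℂ) : Continuous (applyB U) := by
  unfold applyB; fun_prop

lemma continuous_V {d N : ℕ} (a b : Fin N → Fin d) :
    Continuous (fun ψ : Fin d × Fin d → ℂ => V ψ a b) := by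
  unfold V; fun_prop

lemma norm_V_le {d N : ℕ} {ψ : Fin d × Fin d → ℂ} (h : IsUnitVec ψ) (a b : Fin N → Fin d) :
    ‖V ψ a b‖ ≤ 1 := by
  unfold V
  rw [norm_prod]
  refine Finset.prod_le_one (fun _ _ => norm_nonneg _) fun i _ => ?_
  have h1 : Complex.normSq (ψ (a i, b i)) ≤ 1 := by
    rw [← h]
    exact Finset.single_le_sum (f := fun x => Complex.normSq (ψ x))
      (fun x _ => Complex.normSq_nonneg _) (Finset.mem_univ _)
  rw [Complex.normSq_eq_norm_sq] at h1
  nlinarith [norm_nonneg (ψ (a i, b i))]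

lemma integrable_VV {d N : ℕ} (D : Measure (Fin d × Fin d → ℂ)) [IsProbabilityMeasure D]
    (hu : ∀ᵐ ψ ∂D, IsUnitVec ψ) (a b g h : Fin N → Fin d) :
    Integrable (fun ψ => V ψ a b * conj (V ψ g h)) D := by
  refine Integrable.of_bound (C := 1) ?_ ?_
  · exact ((continuous_V a b).mul
      (Complex.continuous_conj.comp (continuous_V g h))).aestronglyMeasurable
  · filter_upwards [hu] with ψ hψ
    rw [norm_mul, RCLike.norm_conj]
    exact mul_le_one₀ (norm_V_le hψ a b) (norm_nonneg _) (norm_V_le hψ g h)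

lemma state_inv {d N : ℕ} (D : Measure (Fin d × Fin d → ℂ)) [IsProbabilityMeasure D]
    (hu : ∀ᵐ ψ ∂D, IsUnitVec ψ)
    (hinv : ∀ U ∈ Matrix.unitaryGroup (Fin d) ℂ, D.map (applyB U) = D)
    (U : Matrix (Fin d) (Fin d) ℂ) (hU : U ∈ Matrix.unitaryGroup (Fin d) ℂ)
    (a b g g' : Fin N → Fin d) :
    ∑ h, (∫ ψ, V ψ a b * conj (V ψ g h) ∂D) * TP U h g' =
      ∑ h, TP U b h * ∫ ψ, V ψ a h * conj (V ψ g g') ∂D := by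
  have hstar : ∀ h : Fin N → Fin d, TP U h g' = conj (TP (star U) g' h) := by
    intro h; simp [TP]
  have e1 : ∑ h, (∫ ψ, V ψ a b * conj (V ψ g h) ∂D) * TP U h g' =
      ∫ ψ, V ψ a b * conj (V (applyB (star U) ψ) g g') ∂D := by
    simp only [← integral_mul_const]
    rw [← integral_finsetSum _ fun h _ => (integrable_VV D hu a b g h).mul_const _]
    congr 1
    ext ψ
    rw [V_applyB, map_sum, Finset.mul_sum]
    refine Finset.sum_congr rfl fun h _ => ?_
    rw [hstar, map_mul]; ring
  have e2 : ∑ h, TP U b h * ∫ ψ, V ψ a h * conj (V ψ g g') ∂D =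
      ∫ ψ, V (applyB U ψ) a b * conj (V ψ g g') ∂D := by
    simp only [← integral_const_mul]
    rw [← integral_finsetSum _ fun h _ => (integrable_VV D hu a h g g').const_mul _]
    congr 1
    ext ψ
    rw [V_applyB, Finset.sum_mul]
    refine Finset.sum_congr rfl fun h _ => ?_
    ring
  rw [e1, e2]
  conv_lhs => rw [← hinv U hU]
  rw [integral_map (continuous_applyB U).aemeasurable]
  · simp only [applyB_star U hU]
  · exact ((continuous_V a b).mul (Complex.continuous_conj.comp
      ((continuous_V g g').comp (continuous_applyB _)))).aestronglyMeasurable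

lemma traceDist_of {κ : Type*} [Fintype κ] [DecidableEq κ] {ρ σ K : Matrix κ κ ℂ}
    (hX : (ρ - σ).IsHermitian) (hK : K.PosSemidef) (h : K * K = (ρ - σ) * (ρ - σ)) :
    traceDist ρ σ = (1 / 2) * K.trace.re := by
  rw [traceDist, dif_pos hX, sum_abs_eig hX hK h]

end conc

/-- Corollary `corollary-4241439`: for ensembles that are unitarily invariant
on `H_B`, discarding the `B` part preserves the trace distance. -/
theorem stmt_4 (d N : ℕ) (hd : 1 ≤ d) (hN : 1 ≤ N)
    (Dyes Dno : Measure (Fin d × Fin d → ℂ))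
    (hPyes : IsProbabilityMeasure Dyes) (hPno : IsProbabilityMeasure Dno)
    (hyesUnit : ∀ᵐ ψ ∂Dyes, IsUnitVec ψ) (hnoUnit : ∀ᵐ ψ ∂Dno, IsUnitVec ψ)
    (hyesInv : ∀ U ∈ Matrix.unitaryGroup (Fin d) ℂ, Dyes.map (applyB U) = Dyes)
    (hnoInv : ∀ U ∈ Matrix.unitaryGroup (Fin d) ℂ, Dno.map (applyB U) = Dno)
    (ρ σ : Matrix (Fin N → Fin d × Fin d) (Fin N → Fin d × Fin d) ℂ)
    (hρ : ∀ x y, ρ x y = ∫ ψ, tpow (outer ψ) N x y ∂Dyes)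
    (hσ : ∀ x y, σ x y = ∫ ψ, tpow (outer ψ) N x y ∂Dno) :
    traceDist ρ σ = traceDist (ptraceBn ρ) (ptraceBn σ) := by
  have hyes : ∀ a b g h : Fin N → Fin d, ρ (fun i => (a i, b i)) (fun i => (g i, h i)) =
      ∫ ψ, V ψ a b * conj (V ψ g h) ∂Dyes := by
    intro a b g h; rw [hρ]; simp only [tpow_outer]
  have hno : ∀ a b g h : Fin N → Fin d, σ (fun i => (a i, b i)) (fun i => (g i, h i)) =
      ∫ ψ, V ψ a b * conj (V ψ g h) ∂Dno := by
    intro a b g h; rw [hσ]; simp only [tpow_outer]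
  let e : (Fin N → Fin d × Fin d) ≃ (Fin N → Fin d) × (Fin N → Fin d) :=
    Equiv.arrowProdEquivProdArrow _ _ _
  obtain ⟨X, hXd⟩ : ∃ X, X = (ρ - σ).submatrix e.symm e.symm := ⟨_, rfl⟩
  have hXe : ∀ a b g h, X (a, b) (g, h) = (∫ ψ, V ψ a b * conj (V ψ g h) ∂Dyes) -
      ∫ ψ, V ψ a b * conj (V ψ g h) ∂Dno := by
    intro a b g h
    rw [← hyes, ← hno, hXd]; rfl
  have hXH : X.IsHermitian := by
    ext ⟨a, b⟩ ⟨g, h⟩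
    rw [Matrix.conjTranspose_apply, hXe, hXe, star_sub, Complex.star_def, ← integral_conj, ← integral_conj]
    simp only [map_mul, Complex.conj_conj, mul_comm]
  let act : MulAction (Equiv.Perm (Fin N)) (Fin N → Fin d) := arrowAction
  have hsm : ∀ (s : Equiv.Perm (Fin N)) (a : Fin N → Fin d), s • a = a ∘ (s⁻¹ : Equiv.Perm (Fin N)) :=
    fun s a => rfl
  have h1 : ∀ (s : Equiv.Perm (Fin N)) p q, X (s • p) q = X p q := by
    rintro s ⟨a, b⟩ ⟨g, h⟩
    rw [Prod.smul_mk, hXe, hXe]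
    have : ∀ ψ : Fin d × Fin d → ℂ, V ψ (s • a) (s • b) = V ψ a b := by
      intro ψ
      rw [hsm, hsm]
      exact Equiv.prod_comp s⁻¹ (fun i => ψ (a i, b i))
    simp only [this]
  have h2 : ∀ G : Matrix (Fin N → Fin d) (Fin N → Fin d) ℂ,
      (∀ (s : Equiv.Perm (Fin N)) a b, G (s • a) (s • b) = G a b) → ∀ a b,
      ∑ g, ∑ h, X (a, b) (g, h) * G h g = ∑ h, G b h * ∑ c, X (a, h) (c, c) := by
    intro G hG a b
    have conv : ∀ G : (Fin N → Fin d) → (Fin N → Fin d) → ℂ,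
        ∑ h, ∑ g, (X (a, b) (g, h) - if h = b then ∑ c, X (a, g) (c, c) else 0) * G h g =
        ∑ g, ∑ h, X (a, b) (g, h) * G h g - ∑ h, G b h * ∑ c, X (a, h) (c, c) := by
      intro G
      simp only [sub_mul, Finset.sum_sub_distrib]
      congr 1
      · exact Finset.sum_comm
      · rw [Finset.sum_comm]
        simp [mul_comm]
    have := functional_zero
      (fun h g => X (a, b) (g, h) - if h = b then ∑ c, X (a, g) (c, c) else 0) ?_ G ?_
    · exact sub_eq_zero.mp ((conv G).symm.trans this)
    · intro U hU
      refine (conv (TP U)).trans ?_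
      rw [sub_eq_zero]
      simp only [Finset.mul_sum]
      rw [Finset.sum_comm (f := fun h c => TP U b h * X (a, h) (c, c))]
      refine Finset.sum_congr rfl fun g _ => ?_
      simp only [hXe, sub_mul, mul_sub, Finset.sum_sub_distrib]
      rw [state_inv Dyes hyesUnit hyesInv U hU, state_inv Dno hnoUnit hnoInv U hU]
    · intro s x y
      have := hG s⁻¹ x y
      rwa [hsm, hsm, inv_inv] at this
  obtain ⟨Z, hZ, hZ2, hZp⟩ := abstract_main (Equiv.Perm (Fin N)) X hXH h1 h2
  have hXs : ρ - σ = X.submatrix e e := by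
    rw [hXd]; ext x y; simp
  have hpX : ptraceBn ρ - ptraceBn σ = pt X := by
    ext a c
    simp only [ptraceBn, pt, Matrix.sub_apply, Matrix.of_apply, ← Finset.sum_sub_distrib]
    refine Finset.sum_congr rfl fun b _ => ?_
    rw [hXd]; rfl
  have hptH : (pt X).IsHermitian := by
    ext a c
    simp only [pt, Matrix.conjTranspose_apply, Matrix.of_apply, star_sum]
    exact Finset.sum_congr rfl fun b _ => hXH.apply _ _
  rw [traceDist_of (K := Z.submatrix e e) (by rw [hXs]; exact hXH.submatrix e) (hZ.submatrix e)
    (by rw [hXs, Matrix.submatrix_mul_equiv, Matrix.submatrix_mul_equiv, hZ2]),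
    traceDist_of (K := pt Z) (by rw [hpX]; exact hptH) (pt_psd hZ) (by rw [hpX]; exact hZp),
    pt_trace]
  congr 2
  exact Equiv.sum_comp e (fun p => Z p p)

end PaperStmt
end

section
/- Tester amplification (Lemma lemma-4181503): Let ι be a finite nonempty type and let P = (Pyes, Pno) be a pair of disjoint sets of density matrices on ι. Let 0 < s < c ≤ 1. If there exists a (c, (s + c)/2)-tester for P with sample complexity N ≥ 1, then there exists a (c, s)-tester for P with sample complexity n * N, where n = ⌈100 * Real.log (1/s + 10) * (c − s)⁻³⌉. -/
open scoped ComplexConjugate ComplexOrder Kronecker Matrix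
open MeasureTheory

namespace PaperStmt

theorem exists_factor {κ : Type*} [Fintype κ] [DecidableEq κ] {M : Matrix κ κ ℂ}
    (hM : M.PosSemidef) : ∃ B : Matrix κ κ ℂ, M = Bᴴ * B := by
  open scoped MatrixOrder Matrix.Norms.L2Operator in
  exact CStarAlgebra.nonneg_iff_eq_star_mul_self.mp hM.nonneg

/-- Tensor product of a family of matrices. -/
noncomputable def tens {κ : Type*} {n : ℕ} (M : Fin n → Matrix κ κ ℂ) :
    Matrix (Fin n → κ) (Fin n → κ) ℂ :=
  Matrix.of fun x y => ∏ i, M i (x i) (y i)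

theorem tens_mul {κ : Type*} [Fintype κ] {n : ℕ} (A B : Fin n → Matrix κ κ ℂ) :
    tens (fun i => A i * B i) = tens A * tens B := by
  classical
  ext x y
  simp only [tens, Matrix.of_apply, Matrix.mul_apply, Fintype.prod_sum, Finset.prod_mul_distrib]

theorem tens_trace {κ : Type*} [Fintype κ] {n : ℕ} (A : Fin n → Matrix κ κ ℂ) :
    (tens A).trace = ∏ i, (A i).trace := by
  classical
  simp only [tens, Matrix.trace, Matrix.diag, Matrix.of_apply, Fintype.prod_sum]

theorem tens_posSemidef {κ : Type*} [Fintype κ] {n : ℕ} (A : Fin n → Matrix κ κ ℂ)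
    (hA : ∀ i, (A i).PosSemidef) : (tens A).PosSemidef := by
  classical
  choose B hB using fun i => exists_factor (hA i)
  have h1 : tens A = (tens B)ᴴ * tens B := by
    have : (tens B)ᴴ = tens fun i => (B i)ᴴ := by
      ext x y
      simp [tens, Matrix.conjTranspose_apply]
    rw [this, ← tens_mul]
    congr 1
    funext i
    exact hB i
  rw [h1]
  exact Matrix.posSemidef_conjTranspose_mul_self _

theorem tens_one {κ : Type*} [Fintype κ] [DecidableEq κ] {n : ℕ} :
    tens (fun _ : Fin n => (1 : Matrix κ κ ℂ)) = 1 := by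
  ext x y
  by_cases h : x = y
  · subst h; simp [tens]
  · rw [Matrix.one_apply_ne h]
    obtain ⟨i, hi⟩ := Function.ne_iff.mp h
    simp only [tens, Matrix.of_apply]
    exact Finset.prod_eq_zero (Finset.mem_univ i) (Matrix.one_apply_ne hi)

theorem trace_mul_nonneg {κ : Type*} [Fintype κ] {A B : Matrix κ κ ℂ}
    (hA : A.PosSemidef) (hB : B.PosSemidef) : 0 ≤ (A * B).trace := by
  classical
  obtain ⟨C, rfl⟩ := exists_factor hB
  rw [← Matrix.mul_assoc, Matrix.trace_mul_comm, ← Matrix.mul_assoc]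
  exact (hA.mul_mul_conjTranspose_same C).trace_nonneg

/-- The family choosing `T` on `S` and `1 - T` off `S`. -/
noncomputable def fam {κ : Type*} [DecidableEq κ] {n : ℕ} (T : Matrix κ κ ℂ) (S : Finset (Fin n)) :
    Fin n → Matrix κ κ ℂ := fun i => if i ∈ S then T else 1 - T

theorem sum_tens_fam {κ : Type*} [Fintype κ] [DecidableEq κ] {n : ℕ} (T : Matrix κ κ ℂ) :
    ∑ S : Finset (Fin n), tens (fam T S) = 1 := by
  rw [← tens_one]
  ext x y
  simp only [Matrix.sum_apply, tens, Matrix.of_apply]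
  have : ∀ i, (1 : Matrix κ κ ℂ) (x i) (y i) = T (x i) (y i) + (1 - T) (x i) (y i) := by
    intro i; simp
  simp only [this, Fintype.prod_add]
  refine Finset.sum_congr rfl fun S _ => ?_
  rw [← Finset.prod_mul_prod_compl S]
  congr 1
  · exact Finset.prod_congr rfl fun i hi => by simp [fam, hi]
  · refine Finset.prod_congr rfl fun i hi => ?_
    rw [fam, if_neg (by simpa using hi)]

theorem isTester_sum {κ : Type*} [Fintype κ] [DecidableEq κ] {n : ℕ} {T : Matrix κ κ ℂ}
    (hT : IsTester T) (f : ℕ → ℝ) (hf0 : ∀ k, 0 ≤ f k) (hf1 : ∀ k, f k ≤ 1) :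
    IsTester (∑ S : Finset (Fin n), (f S.card : ℂ) • tens (fam T S)) := by
  have hp : ∀ S : Finset (Fin n), (tens (fam T S)).PosSemidef := by
    intro S
    refine tens_posSemidef _ fun i => ?_
    unfold fam
    split_ifs
    · exact hT.1
    · exact hT.2
  constructor
  · exact Matrix.posSemidef_sum _ fun S _ => (hp S).smul (by exact_mod_cast hf0 _)
  · rw [← sum_tens_fam (n := n) T, ← Finset.sum_sub_distrib]
    refine Matrix.posSemidef_sum _ fun S _ => ?_
    have : tens (fam T S) - (f S.card : ℂ) • tens (fam T S)
        = ((1 - f S.card : ℝ) : ℂ) • tens (fam T S) := by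
      push_cast
      rw [sub_smul, one_smul]
    rw [this]
    exact (hp S).smul (by exact_mod_cast sub_nonneg.mpr (hf1 _))

theorem trace_sum {κ : Type*} [Fintype κ] [DecidableEq κ] {n : ℕ} (T σ : Matrix κ κ ℂ)
    (hσ : σ.trace = 1) (p : ℝ) (hp : (T * σ).trace = p) (f : ℕ → ℝ) :
    ((∑ S : Finset (Fin n), (f S.card : ℂ) • tens (fam T S)) * tens fun _ => σ).trace
      = ((∑ k ∈ Finset.range (n + 1),
          (n.choose k : ℝ) * (f k * (p ^ k * (1 - p) ^ (n - k))) : ℝ) : ℂ) := by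
  rw [Finset.sum_mul, Matrix.trace_sum]
  have h1 : ∀ S : Finset (Fin n),
      (((f S.card : ℂ) • tens (fam T S)) * tens fun _ => σ).trace
        = ((f S.card * (p ^ S.card * (1 - p) ^ (n - S.card)) : ℝ) : ℂ) := by
    intro S
    rw [Matrix.smul_mul, Matrix.trace_smul, ← tens_mul, tens_trace, smul_eq_mul]
    push_cast
    congr 1
    rw [← Finset.prod_mul_prod_compl S]
    congr 1
    · rw [Finset.prod_congr rfl (g := fun _ => (p : ℂ))]
      · simp
      · intro i hi
        simp [fam, hi, hp]
    · rw [Finset.prod_congr rfl (g := fun _ => (1 - p : ℂ))]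
      · simp [Finset.card_compl]
      · intro i hi
        rw [fam, if_neg (by simpa using hi), Matrix.sub_mul, Matrix.trace_sub, hp, Matrix.one_mul, hσ]
  simp only [h1]
  rw [← Complex.ofReal_sum]
  congr 1
  have := Finset.sum_powerset_apply_card (fun k => f k * (p ^ k * (1 - p) ^ (n - k)))
    (x := (Finset.univ : Finset (Fin n)))
  simpa using this

/-- Splitting `n * N` registers in `n` blocks of `N`. -/
def blk (ι : Type*) (n N : ℕ) : (Fin (n * N) → ι) ≃ (Fin n → Fin N → ι) :=
  (Equiv.arrowCongr finProdFinEquiv.symm (Equiv.refl ι)).trans (Equiv.curry _ _ _)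

theorem tpow_blk {ι : Type*} (ρ : Matrix ι ι ℂ) (n N : ℕ) :
    tpow ρ (n * N) = (tens fun _ : Fin n => tpow ρ N).submatrix (blk ι n N) (blk ι n N) := by
  ext x y
  simp only [tpow, tens, Matrix.of_apply, Matrix.submatrix_apply]
  rw [← Fintype.prod_prod_type', ← finProdFinEquiv.prod_comp]
  rfl

theorem completeness (n : ℕ) (p c δ : ℝ) (hp0 : 0 ≤ p) (hp1 : p ≤ 1) (hcp : c ≤ p) (hδ : 0 < δ)
    (hn : 1 ≤ n * δ ^ 2) :
    c ≤ ∑ k ∈ Finset.range (n + 1), (n.choose k : ℝ) *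
      ((if n * (c - δ) ≤ (k : ℝ) then 1 else 0) * (p ^ k * (1 - p) ^ (n - k))) := by
  have hn0 : (0 : ℝ) < n := by
    rcases Nat.eq_zero_or_pos n with h | h
    · subst h; norm_num at hn
    · exact_mod_cast h
  have hq : 0 ≤ 1 - p := by linarith
  have htot : ∑ k ∈ Finset.range (n + 1), (n.choose k : ℝ) * (p ^ k * (1 - p) ^ (n - k)) = 1 := by
    have := add_pow p (1 - p) n
    rw [show p + (1 - p) = 1 by ring, one_pow] at this
    refine Eq.trans ?_ this.symm
    exact Finset.sum_congr rfl fun k _ => by ring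
  have hvar : ∑ k ∈ Finset.range (n + 1), (n * p - k) ^ 2 *
      ((n.choose k : ℝ) * (p ^ k * (1 - p) ^ (n - k))) = n * p * (1 - p) := by
    have := congrArg (Polynomial.eval p) (bernsteinPolynomial.variance ℝ n)
    simp only [Polynomial.eval_finsetSum] at this
    simp only [bernsteinPolynomial] at this
    simp at this
    rw [← this]
    exact Finset.sum_congr rfl fun k _ => by ring
  have key : ∑ k ∈ Finset.range (n + 1), ((n.choose k : ℝ) * (p ^ k * (1 - p) ^ (n - k))
      - (n * p - k) ^ 2 * ((n.choose k : ℝ) * (p ^ k * (1 - p) ^ (n - k))) / (n * δ) ^ 2)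
      ≤ ∑ k ∈ Finset.range (n + 1), (n.choose k : ℝ) *
      ((if n * (c - δ) ≤ (k : ℝ) then 1 else 0) * (p ^ k * (1 - p) ^ (n - k))) := by
    refine Finset.sum_le_sum fun k _ => ?_
    have hw : 0 ≤ (n.choose k : ℝ) * (p ^ k * (1 - p) ^ (n - k)) := by positivity
    set w := (n.choose k : ℝ) * (p ^ k * (1 - p) ^ (n - k)) with hwd
    split_ifs with hk
    · rw [one_mul]
      have : 0 ≤ (n * p - k) ^ 2 * w / (n * δ) ^ 2 := by positivity
      linarith
    · rw [zero_mul, mul_zero, sub_nonpos, le_div_iff₀ (by positivity), mul_comm]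
      refine mul_le_mul_of_nonneg_right ?_ hw
      refine pow_le_pow_left₀ (by positivity) ?_ 2
      push Not at hk
      nlinarith
  refine le_trans ?_ key
  rw [Finset.sum_sub_distrib, htot, ← Finset.sum_div, hvar]
  have : n * p * (1 - p) / (n * δ) ^ 2 ≤ 1 - p := by
    rw [div_le_iff₀ (by positivity)]
    have h2 : n * p ≤ (n * δ) ^ 2 := by nlinarith
    nlinarith
  linarith

theorem soundness (n : ℕ) (p c s g : ℝ) (hs : 0 < s) (hp0 : 0 ≤ p) (hp1 : p ≤ 1) (hg : 0 < g)
    (hg1 : g ≤ 1) (hcp : p ≤ c - g) (hn : Real.log (1 / s) ≤ n * g ^ 2 / 16) :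
    ∑ k ∈ Finset.range (n + 1), (n.choose k : ℝ) *
      ((if n * (c - g / 2) ≤ (k : ℝ) then 1 else 0) * (p ^ k * (1 - p) ^ (n - k))) ≤ s := by
  have hq : 0 ≤ 1 - p := by linarith
  have hmgf : ∑ k ∈ Finset.range (n + 1), (n.choose k : ℝ) *
      (Real.exp (g / 4 * k) * (p ^ k * (1 - p) ^ (n - k)))
      = (p * Real.exp (g / 4) + (1 - p)) ^ n := by
    rw [add_pow]
    refine Finset.sum_congr rfl fun k _ => ?_
    rw [mul_comm (g / 4), Real.exp_nat_mul]
    ring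
  have hbase : p * Real.exp (g / 4) + (1 - p) ≤ Real.exp (p * (g / 4 + (g / 4) ^ 2)) := by
    have h1 := Real.abs_exp_sub_one_sub_id_le (x := g / 4) (by rw [abs_of_pos] <;> linarith)
    have h2 := (abs_le.mp h1).2
    have h3 := Real.add_one_le_exp (p * (g / 4 + (g / 4) ^ 2))
    nlinarith
  calc _ ≤ ∑ k ∈ Finset.range (n + 1), ((n.choose k : ℝ) *
      (Real.exp (g / 4 * k) * (p ^ k * (1 - p) ^ (n - k)))) * Real.exp (- (g / 4 * (n * (c - g / 2)))) := by
        refine Finset.sum_le_sum fun k _ => ?_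
        have hw : 0 ≤ (n.choose k : ℝ) * (p ^ k * (1 - p) ^ (n - k)) := by positivity
        split_ifs with hk
        · have : 1 ≤ Real.exp (g / 4 * k) * Real.exp (- (g / 4 * (n * (c - g / 2)))) := by
            rw [← Real.exp_add]
            apply Real.one_le_exp
            nlinarith
          nlinarith
        · rw [zero_mul, mul_zero]
          positivity
    _ = (p * Real.exp (g / 4) + (1 - p)) ^ n * Real.exp (- (g / 4 * (n * (c - g / 2)))) := by
        rw [← Finset.sum_mul, hmgf]
    _ ≤ Real.exp (p * (g / 4 + (g / 4) ^ 2)) ^ n * Real.exp (- (g / 4 * (n * (c - g / 2)))) := by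
        gcongr
    _ = Real.exp (n * (p * (g / 4 + (g / 4) ^ 2) - g / 4 * (c - g / 2))) := by
        rw [← Real.exp_nat_mul, ← Real.exp_add]
        congr 1
        ring
    _ ≤ Real.exp (Real.log s) := by
        apply Real.exp_le_exp.mpr
        rw [one_div, Real.log_inv] at hn
        have h1 : p * (g / 4 + (g / 4) ^ 2) - g / 4 * (c - g / 2) ≤ - (g ^ 2 / 16) := by
          nlinarith [mul_nonneg hg.le (sub_nonneg.mpr hcp), mul_nonneg (sq_nonneg g) hq]
        have h2 := mul_le_mul_of_nonneg_left h1 (Nat.cast_nonneg (α := ℝ) n)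
        linarith
    _ = s := Real.exp_log hs

/-- Lemma `lemma-4181503`, tester amplification. -/
theorem stmt_11 (ι : Type*) [Fintype ι] [DecidableEq ι] [Nonempty ι]
    (Pyes Pno : Set (Matrix ι ι ℂ))
    (hdens : ∀ ρ ∈ Pyes ∪ Pno, IsDensity ρ)
    (hdisj : Disjoint Pyes Pno)
    (c s : ℝ) (hs0 : 0 < s) (hsc : s < c) (hc1 : c ≤ 1)
    (N : ℕ) (hN : 1 ≤ N)
    (h : ∃ T : Matrix (Fin N → ι) (Fin N → ι) ℂ,
      IsTester T ∧ (∀ ρ ∈ Pyes, c ≤ acc T ρ) ∧ (∀ ρ ∈ Pno, acc T ρ ≤ (s + c) / 2)) :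
    ∃ T' : Matrix (Fin (⌈100 * Real.log (1 / s + 10) * ((c - s)⁻¹) ^ 3⌉₊ * N) → ι)
        (Fin (⌈100 * Real.log (1 / s + 10) * ((c - s)⁻¹) ^ 3⌉₊ * N) → ι) ℂ,
      IsTester T' ∧ (∀ ρ ∈ Pyes, c ≤ acc T' ρ) ∧ (∀ ρ ∈ Pno, acc T' ρ ≤ s) := by
  obtain ⟨T, hT, hyes, hno⟩ := h
  have hnle := Nat.le_ceil (100 * Real.log (1 / s + 10) * ((c - s)⁻¹) ^ 3)
  generalize ⌈100 * Real.log (1 / s + 10) * ((c - s)⁻¹) ^ 3⌉₊ = n at hnle ⊢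
  have hd : 0 < c - s := by linarith
  have hd1 : c - s ≤ 1 := by linarith
  obtain ⟨g, hgdef⟩ : ∃ g, g = (c - s) / 2 := ⟨_, rfl⟩
  have hg : 0 < g := by linarith
  have h1s : 0 < 1 / s := by positivity
  have hlog1 : 1 ≤ Real.log (1 / s + 10) := by
    rw [Real.le_log_iff_exp_le (by positivity)]
    have := Real.exp_one_lt_d9
    linarith
  have hlogs : Real.log (1 / s) ≤ Real.log (1 / s + 10) :=
    Real.log_le_log h1s (by linarith)
  have hng : 25 * Real.log (1 / s + 10) ≤ n * g ^ 2 := by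
    have h3 : 100 * Real.log (1 / s + 10) ≤ n * (c - s) ^ 3 := by
      rw [inv_pow, ← div_eq_mul_inv, div_le_iff₀ (by positivity)] at hnle
      exact hnle
    have h4 : (c - s) ^ 3 ≤ 4 * g ^ 2 := by
      rw [hgdef]
      nlinarith [sq_nonneg (c - s)]
    have h5 := mul_le_mul_of_nonneg_left h4 (Nat.cast_nonneg (α := ℝ) n)
    linarith
  obtain ⟨f, hf⟩ : ∃ f : ℕ → ℝ,
      f = (fun k : ℕ => if (n : ℝ) * (c - g / 2) ≤ (k : ℝ) then (1 : ℝ) else 0) := by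
    exact ⟨_, rfl⟩
  obtain ⟨A, hA⟩ : ∃ A : Matrix (Fin n → Fin N → ι) (Fin n → Fin N → ι) ℂ,
      A = ∑ S : Finset (Fin n), (f S.card : ℂ) • tens (fam T S) := ⟨_, rfl⟩
  have hAt : IsTester A := by
    rw [hA]
    refine isTester_sum hT f ?_ ?_ <;> intro k <;> rw [hf] <;> dsimp only <;> split_ifs <;> norm_num
  have hacc : ∀ ρ, IsDensity ρ → 0 ≤ acc T ρ ∧ acc T ρ ≤ 1 ∧
      acc (A.submatrix (blk ι n N) (blk ι n N)) ρ = ∑ k ∈ Finset.range (n + 1),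
          (n.choose k : ℝ) * (f k * (acc T ρ ^ k * (1 - acc T ρ) ^ (n - k))) := by
    intro ρ hρ
    have hσ : (tpow ρ N).PosSemidef := tens_posSemidef (fun _ => ρ) fun _ => hρ.1
    have hσ1 : (tpow ρ N).trace = 1 := by
      refine (tens_trace fun _ : Fin N => ρ).trans ?_
      simp [hρ.2]
    have h0 := trace_mul_nonneg hT.1 hσ
    have h1 := trace_mul_nonneg hT.2 hσ
    rw [Matrix.sub_mul, Matrix.trace_sub, Matrix.one_mul, hσ1] at h1
    have hp : (T * tpow ρ N).trace = (acc T ρ : ℂ) := by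
      apply Complex.ext
      · simp [acc]
      · simpa using (Complex.le_def.mp h0).2.symm
    refine ⟨(Complex.le_def.mp h0).1, ?_, ?_⟩
    · have := (Complex.le_def.mp h1).1
      simp only [Complex.sub_re, Complex.one_re, Complex.zero_re] at this
      unfold acc
      linarith
    · have h2 : acc (A.submatrix (blk ι n N) (blk ι n N)) ρ
          = ((A * tens fun _ => tpow ρ N).trace).re := by
        rw [acc, tpow_blk, Matrix.submatrix_mul_equiv]
        congr 1
        exact (blk ι n N).sum_comp (Matrix.diag (A * tens fun _ => tpow ρ N))
      rw [h2, hA, trace_sum T _ hσ1 _ hp f, Complex.ofReal_re]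
  refine ⟨A.submatrix (blk ι n N) (blk ι n N), ⟨hAt.1.submatrix _, ?_⟩, ?_, ?_⟩
  · have := hAt.2.submatrix (blk ι n N)
    rwa [Matrix.submatrix_sub, Pi.sub_apply, Pi.sub_apply, Matrix.submatrix_one_equiv] at this
  · intro ρ hρ
    obtain ⟨h0, h1, h2⟩ := hacc ρ (hdens ρ (Or.inl hρ))
    rw [h2, hf]
    refine completeness n _ c (g / 2) h0 h1 (hyes ρ hρ) (by linarith) ?_
    nlinarith
  · intro ρ hρ
    obtain ⟨h0, h1, h2⟩ := hacc ρ (hdens ρ (Or.inr hρ))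
    rw [h2, hf]
    refine soundness n _ c s g hs0 h0 h1 hg (by linarith) ?_ ?_
    · have := hno ρ hρ
      linarith
    · linarith

end PaperStmt
end
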